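/- Let K be an infinite field, n ≥ 2, and let f(x_1,…,x_m) be a multilinear polynomial over K which is neither a central polynomial nor a polynomial identity for M_n(K) (i.e., Im(f) is not contained in the set of scalar matrices). Then Im(f) on M_n(K) contains a matrix of the form Σ_{i=1}^{n} c_i E_{i,i+1} (indices taken modulo n, so the last summand is c_n E_{n,1}) with c_1 c_2 ⋯ c_n ≠ 0. -/

import Mathlib

/-- Evaluation of the multilinear polynomial `f(x₁,…,x_m) = ∑_{σ ∈ S_m} α_σ x_{σ(1)}⋯x_{σ(m)}`
given by coefficients `α` at the tuple `a`. -/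
def mlEval {K A : Type} [Field K] [Ring A] [Algebra K A] {m : ℕ}
    (α : Equiv.Perm (Fin m) → K) (a : Fin m → A) : A :=
  ∑ σ : Equiv.Perm (Fin m), α σ • (List.ofFn fun i => a (σ i)).prod

/-- The image of the multilinear polynomial with coefficients `α` on the algebra `A`. -/
def mlImage {K A : Type} [Field K] [Ring A] [Algebra K A] {m : ℕ}
    (α : Equiv.Perm (Fin m) → K) : Set A :=
  Set.range (mlEval α)

/-- `a` is homogeneous of degree `g` in the Vasilovsky `ZMod n`-grading of `Mₙ(K)`:
`a` lies in the span of the matrix units `E i j` with `j - i ≡ g (mod n)`. -/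
def VasHomog {K : Type} [Field K] {n : ℕ} (g : ZMod n)
    (a : Matrix (Fin n) (Fin n) K) : Prop :=
  ∀ i j : Fin n, ((j.val : ZMod n) - (i.val : ZMod n)) ≠ g → a i j = 0

/-- Statement (S0): `f` vanishes on homogeneous tuples whose degrees sum to `0`. -/
def StmtS0 {K : Type} [Field K] (n : ℕ) {m : ℕ} (α : Equiv.Perm (Fin m) → K) : Prop :=
  ∀ (g : Fin m → ZMod n) (a : Fin m → Matrix (Fin n) (Fin n) K),
    (∀ i, VasHomog (g i) (a i)) → (∑ i, g i) = 0 → mlEval α a = 0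

/-- Statement (S1): `f` vanishes on homogeneous tuples whose degrees sum to a nonzero element. -/
def StmtS1 {K : Type} [Field K] (n : ℕ) {m : ℕ} (α : Equiv.Perm (Fin m) → K) : Prop :=
  ∀ (g : Fin m → ZMod n) (a : Fin m → Matrix (Fin n) (Fin n) K),
    (∀ i, VasHomog (g i) (a i)) → (∑ i, g i) ≠ 0 → mlEval α a = 0

/-- Statement (S2): `f` has trace-zero values on homogeneous tuples whose degrees sum to `0`. -/
def StmtS2 {K : Type} [Field K] (n : ℕ) {m : ℕ} (α : Equiv.Perm (Fin m) → K) : Prop :=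
  ∀ (g : Fin m → ZMod n) (a : Fin m → Matrix (Fin n) (Fin n) K),
    (∀ i, VasHomog (g i) (a i)) → (∑ i, g i) = 0 → Matrix.trace (mlEval α a) = 0

/-- The set of scalar matrices in `Mₙ(K)`. -/
def scalarSet (K : Type) [Field K] (n : ℕ) : Set (Matrix (Fin n) (Fin n) K) :=
  {b | ∃ c : K, b = c • (1 : Matrix (Fin n) (Fin n) K)}

/-- The set `slₙ(K)` of trace-zero matrices in `Mₙ(K)`. -/
def slSet (K : Type) [Field K] (n : ℕ) : Set (Matrix (Fin n) (Fin n) K) :=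
  {b | Matrix.trace b = 0}

/-!
Grade `Mₙ(K)` by `ZMod n`, the matrix unit `E i j` having degree `j - i`. A non-scalar value of `f`
has a conjugate with a nonzero off-diagonal entry, so by multilinearity some tuple of matrix units
has such a value, and relabelling the indices moves the nonzero entry to position `(0, 1)`. Hence
the degrees of the tuple add up to `1`, so `f` maps all homogeneous tuples of these degrees to
combinations of the `E t (t + 1)`. Cyclic shifts of the indices preserve degrees, so none of the
`n` entries `(t, t + 1)` of `f` vanishes identically on such tuples. If `n < |K|`, a vector space
over `K` is not a union of `n` proper subspaces; choosing the matrices one at a time accordingly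
produces a single tuple at which all `n` entries are nonzero.
-/

section CommonNonvanishing

variable {K ι W : Type*} [Field K] [Fintype ι] [AddCommGroup W] [Module K W]

theorem exists_forall_linearMap_apply_ne_zero {V : Type*} [AddCommGroup V] [Module K V]
    (hK : Fintype.card ι < ENat.card K) (f : ι → V →ₗ[K] W) (hf : ∀ t, f t ≠ 0) :
    ∃ v, ∀ t, f t v ≠ 0 := by
  have hker : ∀ t, LinearMap.ker (f t) ≠ ⊤ := fun t h => hf t (LinearMap.ker_eq_top.mp h)
  have hunion := Submodule.iUnion_ssubset_of_forall_ne_top_of_card_lt Finset.univ _ hker hK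
  simpa [Set.ssubset_univ_iff, Set.iUnion_eq_univ_iff] using hunion

theorem exists_forall_multilinearMap_apply_ne_zero {m : ℕ} {V : Fin m → Type*}
    [∀ k, AddCommGroup (V k)] [∀ k, Module K (V k)] (hK : Fintype.card ι < ENat.card K)
    (F : ι → MultilinearMap K V W) (hF : ∀ t, F t ≠ 0) : ∃ v, ∀ t, F t v ≠ 0 := by
  induction m with
  | zero =>
    refine ⟨0, fun t h => hF t (MultilinearMap.ext fun v => ?_)⟩
    rwa [Subsingleton.elim v 0]
  | succ m ih =>
    have hcurry : ∀ t, (F t).curryLeft ≠ 0 := fun t h =>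
      hF t ((multilinearCurryLeftEquiv K V W).map_eq_zero_iff.mp h)
    obtain ⟨x, hx⟩ := exists_forall_linearMap_apply_ne_zero hK (fun t => (F t).curryLeft) hcurry
    obtain ⟨v, hv⟩ := ih (fun t => (F t).curryLeft x) hx
    exact ⟨Fin.cons x v, hv⟩

theorem exists_forall_mem_multilinearMap_apply_ne_zero {m : ℕ} {V : Fin m → Type*}
    [∀ k, AddCommGroup (V k)] [∀ k, Module K (V k)] (hK : Fintype.card ι < ENat.card K)
    (F : ι → MultilinearMap K V W) (p : ∀ k, Submodule K (V k))
    (hF : ∀ t, ∃ v, (∀ k, v k ∈ p k) ∧ F t v ≠ 0) :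
    ∃ v, (∀ k, v k ∈ p k) ∧ ∀ t, F t v ≠ 0 := by
  have hres : ∀ t, (F t).compLinearMap (fun k => (p k).subtype) ≠ 0 := by
    intro t h
    obtain ⟨v, hvp, hv⟩ := hF t
    exact hv (congr($h fun k => ⟨v k, hvp k⟩))
  obtain ⟨v, hv⟩ := exists_forall_multilinearMap_apply_ne_zero hK _ hres
  exact ⟨fun k => v k, fun k => (v k).2, hv⟩

end CommonNonvanishing

section MultilinearPolynomial

variable {K A B : Type} [Field K] [Ring A] [Algebra K A] [Ring B] [Algebra K B] {m : ℕ}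
  (α : Equiv.Perm (Fin m) → K)

theorem map_mlEval (φ : A →ₐ[K] B) (a : Fin m → A) : φ (mlEval α a) = mlEval α (φ ∘ a) := by
  simp [mlEval, map_list_prod, List.map_ofFn, Function.comp_def]

theorem units_conj_mem_mlImage (P : Aˣ) {x : A} (hx : x ∈ (mlImage α : Set A)) :
    ↑P * x * ↑P⁻¹ ∈ (mlImage α : Set A) := by
  obtain ⟨a, rfl⟩ := hx
  exact ⟨_, (map_mlEval α (MulSemiringAction.toAlgHom K A (ConjAct.toConjAct P)) a).symm⟩

/-- The evaluation `mlEval α` of a multilinear polynomial, bundled as a multilinear map in the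
arguments substituted for its variables. -/
noncomputable def mlMultilinearMap (A : Type) [Ring A] [Algebra K A] :
    MultilinearMap K (fun _ : Fin m => A) A :=
  ∑ σ : Equiv.Perm (Fin m), α σ • (MultilinearMap.mkPiAlgebraFin K m A).domDomCongr σ

theorem mlMultilinearMap_apply (a : Fin m → A) : mlMultilinearMap α A a = mlEval α a := by
  simp [mlMultilinearMap, mlEval]

theorem mlEval_mem_graded {ι : Type*} [AddCommMonoid ι] (𝒜 : ι → Submodule K A)
    [SetLike.GradedMonoid 𝒜] {g : Fin m → ι} {a : Fin m → A} (ha : ∀ k, a k ∈ 𝒜 (g k)) :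
    mlEval α a ∈ 𝒜 (∑ k, g k) := by
  refine Submodule.sum_mem _ fun σ _ => Submodule.smul_mem _ _ ?_
  rw [← Equiv.sum_comp σ g, ← List.sum_ofFn]
  exact SetLike.list_prod_ofFn_mem_graded _ _ fun k => ha (σ k)

end MultilinearPolynomial

section OffDiagonal

theorem mem_range_scalar_of_forall_units_conj_isDiag {R ι : Type*} [CommRing R] [Fintype ι]
    [DecidableEq ι] {M : Matrix ι ι R}
    (hM : ∀ P : (Matrix ι ι R)ˣ, (P.val * M * P⁻¹.val).IsDiag) :
    M ∈ Set.range (Matrix.scalar ι) := by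
  have hdiag : M.IsDiag := by simpa using hM 1
  have heq : ∀ i j, i ≠ j → M i i = M j j := by
    intro i j hij
    let P : (Matrix ι ι R)ˣ :=
      ⟨Matrix.transvection i j 1, Matrix.transvection i j (-1),
        by simp [Matrix.transvection_mul_transvection_same _ _ hij],
        by simp [Matrix.transvection_mul_transvection_same _ _ hij]⟩
    have hentry : (P.val * M * P⁻¹.val) i j = M j j - M i i := by
      simp [P, hdiag hij, hdiag hij.symm, sub_eq_add_neg]
    exact (sub_eq_zero.mp (hentry ▸ hM P hij)).symm
  cases isEmpty_or_nonempty ι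
  · exact ⟨0, Subsingleton.elim _ _⟩
  obtain ⟨i⟩ := ‹Nonempty ι›
  rw [← hdiag.diagonal_diag]
  refine ⟨M i i, congrArg Matrix.diagonal (funext fun j => ?_)⟩
  obtain rfl | hij := eq_or_ne i j
  · rfl
  · exact heq i j hij

variable {K ι κ : Type} [Field K] [Fintype ι] [DecidableEq ι] [Fintype κ] [DecidableEq κ] {m : ℕ}
  (α : Equiv.Perm (Fin m) → K)

/-- The tuple of matrix units `E i j` whose positions `(i, j)` are listed by `p`. -/
def matrixUnits (K : Type) [Field K] (p : Fin m → ι × ι) : Fin m → Matrix ι ι K :=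
  fun k => Matrix.single (p k).1 (p k).2 1

theorem mlEval_matrixUnits_map (e : ι ≃ κ) (p : Fin m → ι × ι) (i j : ι) :
    mlEval α (matrixUnits K (Prod.map e e ∘ p)) (e i) (e j) = mlEval α (matrixUnits K p) i j := by
  have hmap := map_mlEval α (Matrix.reindexAlgEquiv K K e).toAlgHom (matrixUnits K p)
  have htuple : (Matrix.reindexAlgEquiv K K e).toAlgHom ∘ matrixUnits K p =
      matrixUnits K (Prod.map e e ∘ p) := by
    ext k : 1
    simp [matrixUnits]
  rw [htuple] at hmap
  simpa using congr($hmap (e i) (e j)).symm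

theorem exists_mlEval_matrixUnits_apply_ne_zero
    (hf : ¬ (mlImage α : Set (Matrix ι ι K)) ⊆ Set.range (Matrix.scalar ι)) :
    ∃ (p : Fin m → ι × ι) (i j : ι), i ≠ j ∧ mlEval α (matrixUnits K p) i j ≠ 0 := by
  by_contra! hzero
  have hdiag : ∀ M ∈ (mlImage α : Set (Matrix ι ι K)), M.IsDiag := by
    rintro _ ⟨a, rfl⟩ i j hij
    have hentry : (Matrix.entryLinearMap K K i j).compMultilinearMap
        (mlMultilinearMap α (Matrix ι ι K)) = 0 := by
      refine Module.Basis.ext_multilinear (fun _ => Matrix.stdBasis K ι ι) fun p => ?_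
      have hbasis : (fun k => Matrix.stdBasis K ι ι (p k)) = matrixUnits K p :=
        funext fun k => Matrix.stdBasis_eq_single K (p k).1 (p k).2
      simpa [hbasis, mlMultilinearMap_apply] using hzero p i j hij
    simpa [mlMultilinearMap_apply] using congr($hentry a)
  exact hf fun M hM => mem_range_scalar_of_forall_units_conj_isDiag fun P =>
    hdiag _ (units_conj_mem_mlImage α P hM)

variable {α} in
theorem exists_mlEval_matrixUnits_apply_ne_zero_of_ne {p : Fin m → ι × ι} {i j a b : ι}
    (hij : i ≠ j) (hab : a ≠ b) (hp : mlEval α (matrixUnits K p) i j ≠ 0) :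
    ∃ q : Fin m → ι × ι, mlEval α (matrixUnits K q) a b ≠ 0 := by
  obtain ⟨e, rfl, rfl⟩ := MulAction.is_two_pretransitive_iff.mp
    (Equiv.Perm.isMultiplyPretransitive ι 2) hij hab
  exact ⟨Prod.map e e ∘ p, (mlEval_matrixUnits_map α e p i j).trans_ne hp⟩

end OffDiagonal

section VasilovskyGrading

variable {K : Type} [Field K] {n m : ℕ}

/-- The homogeneous component of degree `g` in the Vasilovsky grading of `Mₙ(K)`. -/
def vasHomogSubmodule (K : Type) [Field K] (n : ℕ) (g : ZMod n) :
    Submodule K (Matrix (Fin n) (Fin n) K) where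
  carrier := {a | VasHomog g a}
  add_mem' ha hb i j hij := by simp [ha i j hij, hb i j hij]
  zero_mem' _ _ _ := rfl
  smul_mem' c a ha i j hij := by simp [ha i j hij]

instance vasHomogSubmodule_gradedMonoid : SetLike.GradedMonoid (vasHomogSubmodule K n) where
  one_mem i j hij := Matrix.one_apply_ne fun h => hij (by simp [h])
  mul_mem g h a b ha hb i j hij := by
    rw [Matrix.mul_apply]
    refine Finset.sum_eq_zero fun k _ => ?_
    by_cases hik : (k.val : ZMod n) - i.val = g
    · have hkj : (j.val : ZMod n) - k.val ≠ h := fun hkj => hij (by rw [← hik, ← hkj]; ring)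
      rw [hb k j hkj, mul_zero]
    · rw [ha i k hik, zero_mul]

theorem vasHomog_mlEval (α : Equiv.Perm (Fin m) → K) {g : Fin m → ZMod n}
    {a : Fin m → Matrix (Fin n) (Fin n) K} (ha : ∀ k, VasHomog (g k) (a k)) :
    VasHomog (∑ k, g k) (mlEval α a) :=
  mlEval_mem_graded α (vasHomogSubmodule K n) ha

/-- The degree of the matrix unit `E i j` at the position `(i, j)` in the Vasilovsky grading. -/
def vasDegree (p : Fin n × Fin n) : ZMod n :=
  p.2.val - p.1.val

theorem vasHomog_matrixUnits (p : Fin m → Fin n × Fin n) (k : Fin m) :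
    VasHomog (vasDegree (p k)) (matrixUnits K p k) := by
  intro i j hij
  refine Matrix.single_apply_of_ne _ _ _ _ _ ?_
  rintro ⟨rfl, rfl⟩
  exact hij rfl

theorem sum_vasDegree_eq_of_mlEval_matrixUnits_apply_ne_zero {α : Equiv.Perm (Fin m) → K}
    {p : Fin m → Fin n × Fin n} {i j : Fin n} (hp : mlEval α (matrixUnits K p) i j ≠ 0) :
    ∑ k, vasDegree (p k) = vasDegree (i, j) := by
  by_contra hne
  exact hp (vasHomog_mlEval α (vasHomog_matrixUnits p) i j (Ne.symm hne))

theorem natCast_val_fin_add (a b : Fin n) :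
    ((a + b).val : ZMod n) = a.val + b.val := by
  rw [Fin.val_add, ZMod.natCast_mod, Nat.cast_add]

theorem natCast_val_fin_one [NeZero n] : ((1 : Fin n).val : ZMod n) = 1 := by
  rw [Fin.val_one', ZMod.natCast_mod, Nat.cast_one]

theorem vasDegree_map_addRight [NeZero n] (t : Fin n) (p : Fin n × Fin n) :
    vasDegree (p.map (Equiv.addRight t) (Equiv.addRight t)) = vasDegree p := by
  simp [vasDegree, natCast_val_fin_add]

theorem VasHomog.eq_of_one [NeZero n] {a : Matrix (Fin n) (Fin n) K} (ha : VasHomog 1 a) :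
    a = Matrix.of fun i j : Fin n =>
      if (j.val : ZMod n) = (i.val : ZMod n) + 1 then a i (i + 1) else 0 := by
  ext i j
  rw [Matrix.of_apply]
  split_ifs with hij
  · have hj : j = i + 1 := by
      rw [← natCast_val_fin_one, ← natCast_val_fin_add] at hij
      exact Fin.ext (CharP.natCast_injOn_Iio (ZMod n) n j.isLt (i + 1).isLt hij)
    rw [hj]
  · exact ha i j fun h => hij (by rw [← h]; ring)

theorem exists_vasHomog_forall_mlEval_apply_add_one_ne_zero [NeZero n]
    (hK : n < ENat.card K) (α : Equiv.Perm (Fin m) → K) {p : Fin m → Fin n × Fin n}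
    (hp : mlEval α (matrixUnits K p) 0 1 ≠ 0) :
    ∃ a : Fin m → Matrix (Fin n) (Fin n) K, (∀ k, VasHomog (vasDegree (p k)) (a k)) ∧
      ∀ t, mlEval α a t (t + 1) ≠ 0 := by
  let entry (t : Fin n) := (Matrix.entryLinearMap K K t (t + 1)).compMultilinearMap
    (mlMultilinearMap α (Matrix (Fin n) (Fin n) K))
  have hentry : ∀ t a, entry t a = mlEval α a t (t + 1) := fun t a => by
    simp [entry, mlMultilinearMap_apply]
  simp only [← hentry]
  refine exists_forall_mem_multilinearMap_apply_ne_zero (by simpa using hK) entry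
    (fun k => vasHomogSubmodule K n (vasDegree (p k))) fun t => ?_
  let shift := Equiv.addRight t
  refine ⟨matrixUnits K (Prod.map shift shift ∘ p), fun k => ?_, ?_⟩
  · rw [← vasDegree_map_addRight t (p k)]
    exact vasHomog_matrixUnits (Prod.map shift shift ∘ p) k
  · have hshift := mlEval_matrixUnits_map α shift p 0 1
    have hzero : shift 0 = t := zero_add t
    have hone : shift 1 = t + 1 := add_comm 1 t
    rw [hzero, hone] at hshift
    rwa [hentry, hshift]

end VasilovskyGrading

theorem scalarSet_eq_range_scalar (K : Type) [Field K] (n : ℕ) :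
    scalarSet K n = Set.range (Matrix.scalar (Fin n)) := by
  ext M
  simp [scalarSet, Matrix.smul_one_eq_diagonal, eq_comm]

theorem stmt_11_general {K : Type} [Field K] (n : ℕ) (hK : n < ENat.card K) {m : ℕ}
    (α : Equiv.Perm (Fin m) → K)
    (hf : ¬ (mlImage α : Set (Matrix (Fin n) (Fin n) K)) ⊆ scalarSet K n) :
    ∃ c : Fin n → K, (∏ i, c i) ≠ 0 ∧
      (Matrix.of fun i j : Fin n =>
          if (j.val : ZMod n) = (i.val : ZMod n) + 1 then c i else 0) ∈
        (mlImage α : Set (Matrix (Fin n) (Fin n) K)) := by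
  rw [scalarSet_eq_range_scalar] at hf
  obtain ⟨p, i, j, hij, hp⟩ := exists_mlEval_matrixUnits_apply_ne_zero α hf
  obtain ⟨l, rfl⟩ : ∃ l, n = l + 2 :=
    Nat.exists_eq_add_of_le' (Fin.nontrivial_iff_two_le.mp ⟨i, j, hij⟩)
  obtain ⟨q, hq⟩ := exists_mlEval_matrixUnits_apply_ne_zero_of_ne hij Fin.zero_ne_one hp
  have hdegree : ∑ k, vasDegree (q k) = 1 := by
    simpa [vasDegree] using sum_vasDegree_eq_of_mlEval_matrixUnits_apply_ne_zero hq
  obtain ⟨a, ha, hne⟩ := exists_vasHomog_forall_mlEval_apply_add_one_ne_zero hK α hq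
  have hvalue : VasHomog 1 (mlEval α a) := hdegree ▸ vasHomog_mlEval α ha
  exact ⟨fun t => mlEval α a t (t + 1), Finset.prod_ne_zero_iff.mpr fun t _ => hne t, a,
    hvalue.eq_of_one⟩

/-- over an infinite field, if a multilinear polynomial is neither central nor a
polynomial identity for `Mₙ(K)`, then its image contains a matrix `∑ᵢ cᵢ E_{i,i+1}` (indices
mod `n`) with all `cᵢ ≠ 0`. -/
theorem stmt_11 {K : Type} [Field K] [Infinite K] (n : ℕ) (hn : 2 ≤ n) {m : ℕ}
    (α : Equiv.Perm (Fin m) → K)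
    (hf : ¬ (mlImage α : Set (Matrix (Fin n) (Fin n) K)) ⊆ scalarSet K n) :
    ∃ c : Fin n → K, (∏ i, c i) ≠ 0 ∧
      (Matrix.of fun i j : Fin n =>
          if (j.val : ZMod n) = (i.val : ZMod n) + 1 then c i else 0) ∈
        (mlImage α : Set (Matrix (Fin n) (Fin n) K)) :=
  stmt_11_general n (by simp) α hf
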